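/- For every factor α of ω with |α| ≥ 3, one has φ(α) = Σ_{i ∈ {0,1}, αi a factor of ω} φ(αi) and φ(α) = Σ_{i ∈ {0,1}, iα a factor of ω} φ(iα), where αi (respectively iα) denotes α with the letter i appended (respectively prepended). -/

import Mathlib

/-- One-sided Thue–Morse sequence: parity of the binary digit sum. -/
def tm (n : ℕ) : ℕ := (Nat.digits 2 n).sum % 2

/-- Two-sided Thue–Morse sequence `ω : ℤ → {0,1}`. -/
def tmZ (n : ℤ) : ℕ := if 0 ≤ n then tm n.toNat else tm (-n - 1).toNat

/-- The block `ω_[m, m+k-1]` of the two-sided Thue–Morse sequence. -/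
def tmBlock (m : ℤ) (k : ℕ) : List ℕ := (List.range k).map fun j => tmZ (m + j)

/-- A (nonempty) word is a factor of the two-sided Thue–Morse sequence. -/
def IsFactor (α : List ℕ) : Prop := α ≠ [] ∧ ∃ m : ℤ, α = tmBlock m α.length

/-- The words `i⁽ⁿ⁾`: `blk i 0 = [i]`, `blk i (n+1) = blk i n ++ blk (1-i) n`. -/
def blk : ℕ → ℕ → List ℕ
  | i, 0 => [i]
  | i, n + 1 => blk i n ++ blk (1 - i) n

theorem tm_two_mul (n : ℕ) : tm (2 * n) = tm n := by
  unfold tm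
  rcases Nat.eq_zero_or_pos n with h | h
  · subst h; rfl
  · rw [Nat.digits_def' (by norm_num) (by omega)]
    have h1 : 2 * n % 2 = 0 := by omega
    have h2 : 2 * n / 2 = n := by omega
    rw [h1, h2, List.sum_cons, Nat.zero_add]

theorem tm_le (n : ℕ) : tm n ≤ 1 := by
  unfold tm; omega

theorem tm_two_mul_add (n : ℕ) : tm (2 * n + 1) = 1 - tm n := by
  unfold tm
  rw [Nat.digits_def' (by norm_num) (by omega)]
  have h1 : (2 * n + 1) % 2 = 1 := by omega
  have h2 : (2 * n + 1) / 2 = n := by omega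
  rw [h1, h2, List.sum_cons]
  omega

/-- equality of blocks -/
def EB (m m' k : ℕ) : Prop := ∀ j < k, tm (m + j) = tm (m' + j)

instance (m m' k : ℕ) : Decidable (EB m m' k) := by unfold EB; infer_instance

theorem EB.symm {m m' k : ℕ} (h : EB m m' k) : EB m' m k := fun j hj => (h j hj).symm
theorem EB.trans {m m' m'' k : ℕ} (h : EB m m' k) (h' : EB m' m'' k) : EB m m'' k :=
  fun j hj => (h j hj).trans (h' j hj)
theorem EB.mono {m m' k l : ℕ} (h : EB m m' k) (hl : l ≤ k) : EB m m' l :=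
  fun j hj => h j (by omega)
theorem EB.tail {m m' k : ℕ} (h : EB m m' (k+1)) : EB (m+1) (m'+1) k := by
  intro j hj
  have := h (j+1) (by omega)
  rwa [show m + 1 + j = m + (j+1) by ring, show m' + 1 + j = m' + (j+1) by ring]
theorem EB.cons {m m' k : ℕ} (h : EB (m+1) (m'+1) k) (h0 : tm m = tm m') : EB m m' (k+1) := by
  intro j hj
  rcases j with _ | j
  · simpa using h0
  · have := h j (by omega)
    rwa [show m + (j+1) = m + 1 + j by ring, show m' + (j+1) = m' + 1 + j by ring]
theorem EB.snoc {m m' k : ℕ} (h : EB m m' k) (h0 : tm (m+k) = tm (m'+k)) : EB m m' (k+1) := by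
  intro j hj
  rcases Nat.lt_succ_iff_lt_or_eq.1 hj with h1 | h1
  · exact h j h1
  · subst h1; exact h0

theorem EB_sync {m m' k : ℕ} (hk : 5 ≤ k) (h : EB m m' k) : m % 2 = m' % 2 := by
  have key : ∀ a a', ¬ EB (2 * a) (2 * a' + 1) 5 := by
    intro a a' h
    have h0 := h 0 (by omega)
    have h1 := h 1 (by omega)
    have h2 := h 2 (by omega)
    have h3 := h 3 (by omega)
    have h4 := h 4 (by omega)
    rw [show 2 * a + 0 = 2 * a by ring, tm_two_mul, show 2 * a' + 1 + 0 = 2 * a' + 1 by ring,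
      tm_two_mul_add] at h0
    rw [tm_two_mul_add, show 2 * a' + 1 + 1 = 2 * (a' + 1) by ring, tm_two_mul] at h1
    rw [show 2 * a + 2 = 2 * (a+1) by ring, tm_two_mul,
      show 2 * a' + 1 + 2 = 2 * (a' + 1) + 1 by ring, tm_two_mul_add] at h2
    rw [show 2 * a + 3 = 2 * (a+1) + 1 by ring, tm_two_mul_add,
      show 2 * a' + 1 + 3 = 2 * (a' + 2) by ring, tm_two_mul] at h3
    rw [show 2 * a + 4 = 2 * (a+2) by ring, tm_two_mul,
      show 2 * a' + 1 + 4 = 2 * (a' + 2) + 1 by ring, tm_two_mul_add] at h4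
    have l0 := tm_le a
    have l1 := tm_le (a+1)
    have l2 := tm_le (a+2)
    have l3 := tm_le (a'+1)
    have l4 := tm_le (a'+2)
    rcases Nat.even_or_odd' a with ⟨b, hb | hb⟩
    · have := tm_two_mul b
      have := tm_two_mul_add b
      have := tm_le b
      subst hb; omega
    · have := tm_two_mul (b+1)
      have := tm_two_mul_add (b+1)
      have := tm_le (b+1)
      subst hb
      rw [show 2 * b + 1 + 1 = 2 * (b+1) by ring] at *
      rw [show 2 * b + 1 + 2 = 2 * (b+1) + 1 by ring] at *
      omega
  have h5 := h.mono hk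
  rcases Nat.even_or_odd' m with ⟨b, hb | hb⟩ <;> rcases Nat.even_or_odd' m' with ⟨b', hb' | hb'⟩
  · omega
  · subst hb hb'; exact absurd h5 (key _ _)
  · subst hb hb'; exact absurd h5.symm (key _ _)
  · omega

theorem EB_up {a a' r k c : ℕ} (hc : r + k ≤ 2 * c) (h : EB a a' c) :
    EB (2 * a + r) (2 * a' + r) k := by
  intro j hj
  rcases Nat.even_or_odd' (r + j) with ⟨b, hb | hb⟩
  · have := h b (by omega)
    rw [show 2 * a + r + j = 2 * (a + b) by omega, show 2 * a' + r + j = 2 * (a' + b) by omega,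
      tm_two_mul, tm_two_mul, this]
  · have := h b (by omega)
    rw [show 2 * a + r + j = 2 * (a + b) + 1 by omega,
      show 2 * a' + r + j = 2 * (a' + b) + 1 by omega,
      tm_two_mul_add, tm_two_mul_add, this]

theorem EB_down {a a' r k c : ℕ} (hr : r ≤ 1) (hk : 2 ≤ k) (hc : 2 * c ≤ r + k + 1)
    (h : EB (2 * a + r) (2 * a' + r) k) : EB a a' c := by
  intro j hj
  by_cases h0 : r ≤ 2 * j
  · have := h (2 * j - r) (by omega)
    rwa [show 2 * a + r + (2 * j - r) = 2 * (a + j) by omega,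
      show 2 * a' + r + (2 * j - r) = 2 * (a' + j) by omega, tm_two_mul, tm_two_mul] at this
  · have := h (2 * j + 1 - r) (by omega)
    rw [show 2 * a + r + (2 * j + 1 - r) = 2 * (a + j) + 1 by omega,
      show 2 * a' + r + (2 * j + 1 - r) = 2 * (a' + j) + 1 by omega,
      tm_two_mul_add, tm_two_mul_add] at this
    have := tm_le (a + j)
    have := tm_le (a' + j)
    omega

theorem rep2 (a : ℕ) : ∃ a0 < 6, EB a a0 2 := by
  have v0 : tm 0 = 0 := by decide
  have v1 : tm 1 = 1 := by decide
  have v2 : tm 2 = 1 := by decide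
  have v3 : tm 3 = 0 := by decide
  have v5 : tm 5 = 0 := by decide
  have v6 : tm 6 = 0 := by decide
  have e : ∀ b, tm a = tm b → tm (a+1) = tm (b+1) → EB a b 2 := by
    intro b h1 h2 j hj
    interval_cases j
    · exact h1
    · exact h2
  have h1 := tm_le a
  have h2 := tm_le (a+1)
  interval_cases h : tm a <;> interval_cases h' : tm (a+1)
  · exact ⟨5, by omega, e _ (by simp [*]) (by simp [*])⟩
  · exact ⟨0, by omega, e _ (by simp [*]) (by simp [*])⟩
  · exact ⟨2, by omega, e _ (by simp [*]) (by simp [*])⟩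
  · exact ⟨1, by omega, e _ (by simp [*]) (by simp [*])⟩

theorem rep_up {c N : ℕ} (h : ∀ a, ∃ a0 < N, EB a a0 c) (k : ℕ) (hk : k + 1 ≤ 2 * c) :
    ∀ a, ∃ a0 < 2 * N, EB a a0 k := by
  intro a
  obtain ⟨b, hb, hE⟩ := h (a / 2)
  refine ⟨2 * b + a % 2, by omega, ?_⟩
  have := EB_up (r := a % 2) (k := k) (by omega) hE
  rwa [Nat.div_add_mod] at this

theorem rep5 : ∀ a, ∃ a0 < 24, EB a a0 5 :=
  rep_up (rep_up rep2 3 (by omega)) 5 (by omega)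

/-- left speciality of the block at `m+1` -/
def SL (m k : ℕ) : Prop := ∃ m', tm m' ≠ tm m ∧ EB (m'+1) (m+1) k
/-- right speciality -/
def SR (m k : ℕ) : Prop := ∃ m', tm (m'+k) ≠ tm (m+k) ∧ EB m' m k

theorem SL_fin {m m0 k : ℕ} (hk : k ≤ 4) (h : EB m m0 5) :
    SL m k ↔ ∃ m' < 24, tm m' ≠ tm m0 ∧ EB (m'+1) (m0+1) k := by
  have h0 : tm m = tm m0 := h 0 (by omega)
  have ht : EB (m+1) (m0+1) k := (h.mono (l := k+1) (by omega)).tail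
  constructor
  · rintro ⟨m', h1, h2⟩
    obtain ⟨p, hp, hE⟩ := rep5 m'
    refine ⟨p, hp, ?_, ?_⟩
    · have := hE 0 (by omega)
      simp only [Nat.add_zero] at this
      rw [← this, ← h0]; exact h1
    · exact ((hE.mono (l := k+1) (by omega)).tail.symm.trans h2).trans ht
  · rintro ⟨m', _, h1, h2⟩
    exact ⟨m', by rwa [h0], h2.trans ht.symm⟩

theorem SR_fin {m m0 k : ℕ} (hk : k ≤ 4) (h : EB m m0 5) :
    SR m k ↔ ∃ m' < 24, tm (m'+k) ≠ tm (m0+k) ∧ EB m' m0 k := by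
  have h0 : tm (m+k) = tm (m0+k) := h k (by omega)
  have ht : EB m m0 k := h.mono (by omega)
  constructor
  · rintro ⟨m', h1, h2⟩
    obtain ⟨p, hp, hE⟩ := rep5 m'
    refine ⟨p, hp, ?_, ?_⟩
    · have := hE k (by omega)
      rw [← this, ← h0]; exact h1
    · exact ((hE.mono (by omega)).symm.trans h2).trans ht
  · rintro ⟨m', _, h1, h2⟩
    exact ⟨m', by rwa [h0], h2.trans ht.symm⟩

set_option maxRecDepth 100000 in
theorem fin1 : ∀ m < 24, (∃ m' < 24, tm m' ≠ tm m ∧ EB (m'+1) (m+1) 4) ↔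
    ¬ (∃ m' < 24, tm m' ≠ tm (m+1) ∧ EB (m'+1) (m+1+1) 3) := by
  decide +kernel

theorem fin2 : ∀ m < 24, (∃ m' < 24, tm m' ≠ tm m ∧ EB (m'+1) (m+1) 3) ↔
    (∃ m' < 24, tm (m'+3) ≠ tm (m+3) ∧ EB m' m 3) := by
  decide +kernel

theorem fin3 : ∀ m < 24, (∃ m' < 24, tm m' ≠ tm m ∧ EB (m'+1) (m+1) 3) ↔
    ¬ (∃ m' < 24, tm (m'+4) ≠ tm (m+4) ∧ EB m' m 4) := by
  decide +kernel

theorem f5 (f : ℕ → ℕ → ℝ) (h3 : ∀ m, f m 3 = 1 / 6)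
    (hS : ∀ m k, 3 ≤ k → SL m k → f m (k+1) = f (m+1) k / 2)
    (hN : ∀ m k, 3 ≤ k → ¬ SL m k → f m (k+1) = f (m+1) k) (m : ℕ) : f m 5 = 1 / 12 := by
  have key : SL m 4 ↔ ¬ SL (m+1) 3 := by
    obtain ⟨m0, hm0, hE⟩ := rep5 m
    rw [SL_fin le_rfl hE, fin1 m0 hm0, not_iff_not]
    obtain ⟨m1, hm1, hE1⟩ := rep5 (m+1)
    rw [SL_fin (by omega) hE1]
    have hE2 : EB (m0+1) m1 4 := hE.tail.symm.trans (hE1.mono (by omega))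
    have e0 : tm (m0+1) = tm m1 := hE2 0 (by omega)
    have e1 : EB (m0+1+1) (m1+1) 3 := hE2.tail
    constructor
    · rintro ⟨p, hp, h1, h2⟩
      exact ⟨p, hp, by rwa [← e0], h2.trans e1⟩
    · rintro ⟨p, hp, h1, h2⟩
      exact ⟨p, hp, by rwa [e0], h2.trans e1.symm⟩
  by_cases h : SL (m+1) 3
  · rw [hN m 4 (by omega) (by tauto), hS (m+1) 3 le_rfl h, h3]; norm_num
  · rw [hS m 4 (by omega) (by tauto), hN (m+1) 3 le_rfl h, h3]; norm_num

theorem fdesub (f : ℕ → ℕ → ℝ) (h3 : ∀ m, f m 3 = 1 / 6)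
    (hS : ∀ m k, 3 ≤ k → SL m k → f m (k+1) = f (m+1) k / 2)
    (hN : ∀ m k, 3 ≤ k → ¬ SL m k → f m (k+1) = f (m+1) k) (k : ℕ) (hk : 5 ≤ k) :
    ∀ a r, r ≤ 1 → f (2 * a + r) k = f a ((r + k + 1) / 2) / 2 := by
  induction k, hk using Nat.le_induction with
  | base =>
    intro a r hr
    rw [f5 f h3 hS hN, show (r + 5 + 1) / 2 = 3 by omega, h3]; norm_num
  | succ k hk ih =>
    intro a r hr
    obtain rfl | rfl : r = 0 ∨ r = 1 := by omega
    · have hn : ¬ SL (2 * a + 0) k := by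
        rintro ⟨m', h1, h2⟩
        have hs := EB_sync hk h2
        obtain ⟨a', rfl⟩ : ∃ a', m' = 2 * a' := ⟨m' / 2, by omega⟩
        have := EB_down (c := (k+2)/2) le_rfl (by omega) (by omega) h2
        have := this 0 (by omega)
        apply h1
        rw [Nat.add_zero, tm_two_mul, tm_two_mul]
        exact this
      rw [hN _ _ (by omega) hn]
      have := ih a 1 le_rfl
      rw [show 2 * a + 0 + 1 = 2 * a + 1 by ring, this,
        show (0 + (k+1) + 1) / 2 = (1 + k + 1) / 2 by omega]
    · have hiff : SL (2 * a + 1) k ↔ SL a ((k+1)/2) := by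
        constructor
        · rintro ⟨m', h1, h2⟩
          have hs := EB_sync hk h2
          obtain ⟨a', rfl⟩ : ∃ a', m' = 2 * a' + 1 := ⟨m' / 2, by omega⟩
          have h2' : EB (2 * (a'+1) + 0) (2 * (a+1) + 0) k := h2
          refine ⟨a', ?_, EB_down (by omega) (by omega) (by omega) h2'⟩
          intro h
          apply h1
          rw [tm_two_mul_add, tm_two_mul_add, h]
        · rintro ⟨a', h1, h2⟩
          refine ⟨2 * a' + 1, ?_, EB_up (r := 0) (a := a'+1) (a' := a+1) (by omega) h2⟩
          rw [tm_two_mul_add, tm_two_mul_add]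
          have := tm_le a
          have := tm_le a'
          omega
      have e1 := ih (a+1) 0 (by omega)
      rw [show (0 + k + 1) / 2 = (k+1)/2 by omega] at e1
      rw [show (1 + (k+1) + 1) / 2 = (k+1)/2 + 1 by omega]
      have e2 : f (2 * a + 1 + 1) k = f (a+1) ((k+1)/2) / 2 := e1
      by_cases h : SL (2 * a + 1) k
      · rw [hS _ _ (by omega) h, hS _ _ (by omega) (hiff.1 h), e2]
      · rw [hN _ _ (by omega) h, hN _ _ (by omega) (fun h' => h (hiff.2 h')), e2]

theorem fright (f : ℕ → ℕ → ℝ) (h3 : ∀ m, f m 3 = 1 / 6)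
    (hS : ∀ m k, 3 ≤ k → SL m k → f m (k+1) = f (m+1) k / 2)
    (hN : ∀ m k, 3 ≤ k → ¬ SL m k → f m (k+1) = f (m+1) k) (k : ℕ) (hk : 3 ≤ k) :
    ∀ m, (¬ SR m k → f m k = f m (k+1)) ∧
      (∀ m', EB m' m k → tm (m'+k) ≠ tm (m+k) → f m k = f m (k+1) + f m' (k+1)) := by
  have i2 : ∀ m, SL m 3 ↔ SR m 3 := by
    intro m
    obtain ⟨m0, hm0, hE⟩ := rep5 m
    rw [SL_fin (by omega) hE, SR_fin (by omega) hE, fin2 m0 hm0]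
  have i3 : ∀ m, SL m 3 ↔ ¬ SR m 4 := by
    intro m
    obtain ⟨m0, hm0, hE⟩ := rep5 m
    rw [SL_fin (by omega) hE, SR_fin (by omega) hE, fin3 m0 hm0]
  induction k using Nat.strong_induction_on with
  | _ k ih =>
    intro m
    rcases (by omega : k = 3 ∨ k = 4 ∨ 5 ≤ k) with rfl | rfl | hk5
    · constructor
      · intro h
        rw [hN m 3 le_rfl (by rwa [i2]), h3, h3]
      · intro m' h1 h2
        have a1 : SR m 3 := ⟨m', h2, h1⟩
        have a2 : SR m' 3 := ⟨m, h2.symm, h1.symm⟩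
        rw [hS m 3 le_rfl ((i2 m).2 a1), hS m' 3 le_rfl ((i2 m').2 a2), h3, h3, h3]
        norm_num
    · constructor
      · intro h
        rw [f5 f h3 hS hN, hS m 3 le_rfl ((i3 m).2 h), h3]; norm_num
      · intro m' h1 h2
        have a1 : SR m 4 := ⟨m', h2, h1⟩
        rw [f5 f h3 hS hN, f5 f h3 hS hN, hN m 3 le_rfl (fun h => (i3 m).1 h a1), h3]; norm_num
    · obtain ⟨a, r, hr, rfl⟩ : ∃ a r, r ≤ 1 ∧ m = 2 * a + r := ⟨m / 2, m % 2, by omega, by omega⟩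
      have hd : ∀ m', EB m' (2 * a + r) k → ∃ a', m' = 2 * a' + r ∧ EB a' a ((r + k + 1)/2) := by
        intro m' h
        have hs := EB_sync hk5 h
        obtain ⟨a', rfl⟩ : ∃ a', m' = 2 * a' + r := ⟨m' / 2, by omega⟩
        exact ⟨a', rfl, EB_down hr (by omega) (by omega) h⟩
      have e1 := fdesub f h3 hS hN k hk5 a r hr
      have e2 := fun a => fdesub f h3 hS hN (k+1) (by omega) a r hr
      rcases Nat.even_or_odd' (r + k) with ⟨c, hc | hc⟩
      · rw [show (r + k + 1) / 2 = c by omega] at e1 hd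
        simp only [show (r + (k + 1) + 1) / 2 = c + 1 by omega] at e2
        have ht : ∀ a, tm (2 * a + r + k) = tm (a + c) := by
          intro a
          rw [show 2 * a + r + k = 2 * (a + c) by omega, tm_two_mul]
        have I := ih c (by omega) (by omega) a
        constructor
        · intro h
          rw [e1, e2, I.1]
          rintro ⟨a', h1, h2⟩
          exact h ⟨2 * a' + r, by rwa [ht, ht], EB_up (by omega) h2⟩
        · intro m' h1 h2
          obtain ⟨a', rfl, h4⟩ := hd m' h1
          rw [ht, ht] at h2
          rw [e1, e2, e2, I.2 a' h4 h2]
          ring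
      · rw [show (r + k + 1) / 2 = c + 1 by omega] at e1 hd
        simp only [show (r + (k + 1) + 1) / 2 = c + 1 by omega] at e2
        constructor
        · intro _
          rw [e1, e2]
        · intro m' h1 h2
          obtain ⟨a', rfl, h4⟩ := hd m' h1
          have := EB_up (r := r) (k := k+1) (by omega) h4
          exact absurd (this k (by omega)) h2

/-- block of the one-sided sequence -/
def BN (m k : ℕ) : List ℕ := (List.range k).map fun j => tm (m + j)

theorem BN_len (m k : ℕ) : (BN m k).length = k := by simp [BN]

theorem BN_eq {m m' k : ℕ} : BN m k = BN m' k ↔ EB m m' k := by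
  simp [BN, EB, List.map_inj_left]

theorem BN_cons (m k : ℕ) : BN m (k+1) = tm m :: BN (m+1) k := by
  simp only [BN, List.range_succ_eq_map, List.map_cons, List.map_map, Nat.add_zero]
  congr 1
  apply List.map_congr_left
  intro j _
  simp only [Function.comp]
  congr 1; omega

theorem BN_snoc (m k : ℕ) : BN m (k+1) = BN m k ++ [tm (m+k)] := by
  simp [BN, List.range_succ]

theorem tm_shift (N : ℕ) : ∀ j < 4 ^ N, tm (6 * 4 ^ N + j) = tm j ∧ tm (6 * 4 ^ N - 1 - j) = tm j := by
  have t4 : ∀ x s, s < 4 → tm (4 * x + s) = if s = 0 ∨ s = 3 then tm x else 1 - tm x := by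
    intro x s hs
    have := tm_le x
    interval_cases s
    · rw [show 4 * x + 0 = 2 * (2 * x) by ring, tm_two_mul, tm_two_mul]; simp
    · rw [show 4 * x + 1 = 2 * (2 * x) + 1 by ring, tm_two_mul_add, tm_two_mul]; simp
    · rw [show 4 * x + 2 = 2 * (2 * x + 1) by ring, tm_two_mul, tm_two_mul_add]; simp
    · rw [show 4 * x + 3 = 2 * (2 * x + 1) + 1 by ring, tm_two_mul_add, tm_two_mul_add]; simp; omega
  induction N with
  | zero =>
    intro j hj
    obtain rfl : j = 0 := by simpa using hj
    decide
  | succ N ih =>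
    intro j hj
    have hp : 4 ^ (N+1) = 4 * 4 ^ N := by ring
    rw [hp] at hj ⊢
    obtain ⟨q, s, hs, rfl⟩ : ∃ q s, s < 4 ∧ j = 4 * q + s := ⟨j / 4, j % 4, by omega, by omega⟩
    obtain ⟨i1, i2⟩ := ih q (by omega)
    constructor
    · rw [show 6 * (4 * 4 ^ N) + (4 * q + s) = 4 * (6 * 4 ^ N + q) + s by ring, t4 _ _ hs, t4 _ _ hs,
        i1]
    · rw [show 6 * (4 * 4 ^ N) - 1 - (4 * q + s) = 4 * (6 * 4 ^ N - 1 - q) + (3 - s) by omega,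
        t4 _ _ (by omega), t4 _ _ hs, i2]
      have : (3 - s = 0 ∨ 3 - s = 3) ↔ (s = 0 ∨ s = 3) := by omega
      simp only [this]

theorem tmBlock_eq (m : ℤ) (k : ℕ) :
    tmBlock m k = (List.range k).map fun j : ℕ => tmZ (m + (j : ℤ)) := by
  unfold tmBlock
  have : ∀ l : List ℕ, (do let a ← l; pure (a : ℤ) : List ℤ) = l.map (fun a : ℕ => (a : ℤ)) := by
    intro l
    induction l with
    | nil => rfl
    | cons a l ih => simpa using ih
  rw [this, List.map_map]
  rfl

theorem tmBlock_nat (m : ℤ) (k : ℕ) : ∃ n : ℕ, tmBlock m k = BN n k := by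
  obtain ⟨N, hN⟩ : ∃ N : ℕ, m.natAbs + k < 4 ^ N := ⟨m.natAbs + k, Nat.lt_pow_self (by norm_num)⟩
  refine ⟨(6 * 4 ^ N + m).toNat, ?_⟩
  rw [tmBlock_eq]
  unfold BN
  apply List.map_congr_left
  intro j hj
  have hj := List.mem_range.1 hj
  have hc : ((4 ^ N : ℕ) : ℤ) = 4 ^ N := by push_cast; rfl
  rw [← hc]
  generalize hP : 4 ^ N = P at *
  unfold tmZ
  split_ifs with h
  · have := (tm_shift N (m + j).toNat (by omega)).1
    rw [← this, hP]
    congr 1; omega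
  · have := (tm_shift N (-(m + j) - 1).toNat (by omega)).2
    rw [← this, hP]
    congr 1; omega

theorem tmBlock_ofNat (n k : ℕ) : tmBlock n k = BN n k := by
  rw [tmBlock_eq]
  unfold BN
  apply List.map_congr_left
  intro j hj
  unfold tmZ
  rw [if_pos (by omega)]
  congr 1

theorem isFactor_iff (w : List ℕ) : IsFactor w ↔ w ≠ [] ∧ ∃ n : ℕ, w = BN n w.length := by
  unfold IsFactor
  refine and_congr_right fun _ => ⟨?_, ?_⟩
  · rintro ⟨m, hm⟩
    obtain ⟨n, hn⟩ := tmBlock_nat m w.length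
    exact ⟨n, hm.trans hn⟩
  · rintro ⟨n, hn⟩
    exact ⟨n, hn.trans (tmBlock_ofNat _ _).symm⟩

theorem isFactor_BN (m k : ℕ) : IsFactor (BN m (k+1)) := by
  rw [isFactor_iff]
  refine ⟨by simp [BN_cons], m, by rw [BN_len]⟩

theorem isFactor_cons (i m k : ℕ) : IsFactor (i :: BN m k) ↔ ∃ n, tm n = i ∧ EB (n+1) m k := by
  rw [isFactor_iff]
  simp only [List.length_cons, BN_len, BN_cons, List.cons.injEq, ← BN_eq]
  constructor
  · rintro ⟨_, n, h1, h2⟩; exact ⟨n, h1.symm, h2.symm⟩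
  · rintro ⟨n, h1, h2⟩; exact ⟨by simp, n, h1.symm, h2.symm⟩

theorem isFactor_snoc (i m k : ℕ) :
    IsFactor (BN m k ++ [i]) ↔ ∃ n, tm (n+k) = i ∧ EB n m k := by
  rw [isFactor_iff]
  simp only [List.length_append, BN_len, List.length_singleton, BN_snoc, ← BN_eq]
  constructor
  · rintro ⟨_, n, h⟩
    have := List.append_inj h (by simp [BN_len])
    exact ⟨n, by simpa using this.2.symm, this.1.symm⟩
  · rintro ⟨n, h1, h2⟩; exact ⟨by simp, n, by rw [h1, h2]⟩

theorem left_ext (m k : ℕ) : ∃ n, EB (n+1) m k := by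
  obtain ⟨n, hn⟩ := tmBlock_nat ((m : ℤ) - 1) (k+1)
  refine ⟨n, ?_⟩
  intro j hj
  have h := congrArg (fun l => l[j+1]?) hn
  simp only [tmBlock_eq, BN, List.getElem?_map] at h
  rw [List.getElem?_range (by omega)] at h
  simp only [Option.map_some, Option.some.injEq] at h
  rw [show n + 1 + j = n + (j+1) by ring, ← h]
  unfold tmZ
  rw [if_pos (by push_cast; omega)]
  congr 1; push_cast; omega

open Classical in
/-- The function `φ` on factors of the two-sided Thue–Morse sequence (defined by recursion
on the length: `φ(α) = 1/6` for `|α| = 3`, `φ(iα) = φ(α)` if `(1-i)α` is not a factor, and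
`φ(iα) = φ(α)/2` if `(1-i)α` is a factor) is additive under one-letter extensions on
either side. -/
theorem phi_extension_sums (φ : List ℕ → ℝ)
    (hφ3 : ∀ α : List ℕ, IsFactor α → α.length = 3 → φ α = 1 / 6)
    (hφ1 : ∀ (i : ℕ) (α : List ℕ), IsFactor (i :: α) → 3 ≤ α.length →
      ¬ IsFactor ((1 - i) :: α) → φ (i :: α) = φ α)
    (hφ2 : ∀ (i : ℕ) (α : List ℕ), IsFactor (i :: α) → 3 ≤ α.length →
      IsFactor ((1 - i) :: α) → φ (i :: α) = φ α / 2) :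
    ∀ α : List ℕ, IsFactor α → 3 ≤ α.length →
      (φ α = (if IsFactor (α ++ [0]) then φ (α ++ [0]) else 0) +
             (if IsFactor (α ++ [1]) then φ (α ++ [1]) else 0)) ∧
      (φ α = (if IsFactor (0 :: α) then φ (0 :: α) else 0) +
             (if IsFactor (1 :: α) then φ (1 :: α) else 0)) := by 
  have hS : ∀ m k, 3 ≤ k → SL m k → φ (BN m (k+1)) = φ (BN (m+1) k) / 2 := by
    rintro m k hk ⟨m', h1, h2⟩
    have hf := isFactor_BN m k
    rw [BN_cons] at hf ⊢
    refine hφ2 _ _ hf (by rwa [BN_len]) ((isFactor_cons _ _ _).2 ⟨m', ?_, h2⟩)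
    have := tm_le m
    have := tm_le m'
    omega
  have hN : ∀ m k, 3 ≤ k → ¬ SL m k → φ (BN m (k+1)) = φ (BN (m+1) k) := by
    intro m k hk h
    have hf := isFactor_BN m k
    rw [BN_cons] at hf ⊢
    refine hφ1 _ _ hf (by rwa [BN_len]) fun h' => h ?_
    obtain ⟨n, h1, h2⟩ := (isFactor_cons _ _ _).1 h'
    refine ⟨n, ?_, h2⟩
    have := tm_le m
    omega
  have h3 : ∀ m, φ (BN m 3) = 1 / 6 := fun m => hφ3 _ (isFactor_BN m 2) (BN_len _ _)
  intro α hα hlen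
  obtain ⟨_, m, hm⟩ := (isFactor_iff α).1 hα
  generalize α.length = k at hm hlen
  subst hm
  constructor
  · obtain ⟨r1, r2⟩ := fright (fun m k => φ (BN m k)) h3 hS hN k hlen m
    have hfm : IsFactor (BN m k ++ [tm (m+k)]) := (isFactor_snoc _ _ _).2 ⟨m, rfl, fun _ _ => rfl⟩
    have hm1 := tm_le (m+k)
    have key : φ (BN m k) = φ (BN m k ++ [tm (m+k)]) +
        (if IsFactor (BN m k ++ [1 - tm (m+k)]) then φ (BN m k ++ [1 - tm (m+k)]) else 0) := by
      split_ifs with h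
      · obtain ⟨n, h1, h2⟩ := (isFactor_snoc _ _ _).1 h
        rw [r2 n h2 (by omega), BN_snoc, BN_snoc, BN_eq.2 h2, h1]
      · rw [r1, BN_snoc, add_zero]
        rintro ⟨n, h1, h2⟩
        have := tm_le (n+k)
        exact h ((isFactor_snoc _ _ _).2 ⟨n, by omega, h2⟩)
    obtain h0 | h0 : tm (m+k) = 0 ∨ tm (m+k) = 1 := by omega
    · rw [h0] at key hfm
      rw [if_pos hfm]; exact key
    · rw [h0] at key hfm
      rw [if_pos hfm, add_comm]; exact key
  · obtain ⟨n, hn⟩ := left_ext m k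
    have hf : IsFactor (tm n :: BN m k) := (isFactor_cons _ _ _).2 ⟨n, rfl, hn⟩
    have hn1 := tm_le n
    have hl : 3 ≤ (BN m k).length := by rwa [BN_len]
    have key : φ (BN m k) = φ (tm n :: BN m k) +
        (if IsFactor ((1 - tm n) :: BN m k) then φ ((1 - tm n) :: BN m k) else 0) := by
      split_ifs with h
      · rw [hφ2 _ _ hf hl h, hφ2 _ _ h hl (by rwa [show 1 - (1 - tm n) = tm n by omega])]
        ring
      · rw [hφ1 _ _ hf hl h, add_zero]
    obtain h0 | h0 : tm n = 0 ∨ tm n = 1 := by omega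
    · rw [h0] at key hf
      rw [if_pos hf]; exact key
    · rw [h0] at key hf
      rw [if_pos hf, add_comm]; exact key
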